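/- Let p(x,y) = x^{i_1} y^{i_2}, q(x,y) = x^{j_1} y^{j_2}, and r(x,y) = p(x,y)·q(x,y), and let d = i_1 + i_2 + j_1 + j_2 be the degree of r. Let X, Y be n×n Hermitian complex matrices and ρ, A, B arbitrary n×n complex matrices. Then there exist ℓ ≤ d^2 complex numbers Z_1, …, Z_ℓ such that tr(p(X,Y|A)·q(X,Y|B)†·ρ) − tr(A·r(X,Y|B)†·ρ) = ∑_{i=1}^{ℓ} Z_i, where every Z_i has one of the following three forms: (1) ±tr([(X,Y)_S, A]·[(X,Y)_T, B]†·[X,ρ]) for some sequences S, T ∈ {0,1}^* with len(S) + len(T) = d − 1; (2) ±tr([(X,Y)_S, A]·[(X,Y)_T, B]†·[Y,ρ]) with len(S) + len(T) = d − 1; (3) ±tr(A·[(X,Y)_S, [[X,Y], [(X,Y)_T, B]]]†·ρ) with len(S) + len(T) = d − 2. -/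

import Mathlib

open scoped BigOperators Matrix

/-- The commutator `[M, N] = MN - NM`. -/
noncomputable def matComm {n : ℕ} (M N : Matrix (Fin n) (Fin n) ℂ) : Matrix (Fin n) (Fin n) ℂ :=
  M * N - N * M

/-- The nested commutator `[A, B]_k`, with `[A, B]_0 = B` and
`[A, B]_{k+1} = [A, [A, B]_k]`. -/
noncomputable def nestedComm {n : ℕ} (A B : Matrix (Fin n) (Fin n) ℂ) : ℕ → Matrix (Fin n) (Fin n) ℂ
  | 0 => B
  | k + 1 => A * nestedComm A B k - nestedComm A B k * A

/-- The bivariate nested commutator `[(X,Y)_S, A]`: for `S ∈ {0,1}^ℓ` (encoded as a list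
of booleans, `false` for `0` and `true` for `1`),
`[(X,Y)_S, A] = [Z₁, [Z₂, [⋯ [Z_ℓ, A] ⋯]]]` where `Zᵢ = X` if `sᵢ = 0` and `Zᵢ = Y`
otherwise. -/
noncomputable def commSeq {n : ℕ} (X Y : Matrix (Fin n) (Fin n) ℂ) :
    List Bool → Matrix (Fin n) (Fin n) ℂ → Matrix (Fin n) (Fin n) ℂ
  | [], A => A
  | b :: S, A => matComm (if b then Y else X) (commSeq X Y S A)

/-- The allowed error terms. -/
def AllowedTerm {n : ℕ} (X Y A B ρ : Matrix (Fin n) (Fin n) ℂ) (d : ℕ) (z : ℂ) : Prop :=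
  ∃ (s : ℂ) (Sl Tl : List Bool), (s = 1 ∨ s = -1) ∧
          ((Sl.length + Tl.length = d - 1 ∧
              z = s * Matrix.trace (commSeq X Y Sl A * (commSeq X Y Tl B)ᴴ * matComm X ρ)) ∨
           (Sl.length + Tl.length = d - 1 ∧
              z = s * Matrix.trace (commSeq X Y Sl A * (commSeq X Y Tl B)ᴴ * matComm Y ρ)) ∨
           (Sl.length + Tl.length = d - 2 ∧
              z = s * Matrix.trace
                (A * (commSeq X Y Sl (matComm (matComm X Y) (commSeq X Y Tl B)))ᴴ * ρ)))

/-- `z` is a sum of `k` terms satisfying `P`. -/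
def SumOf (P : ℂ → Prop) (k : ℕ) (z : ℂ) : Prop :=
  ∃ Z : Fin k → ℂ, z = ∑ i, Z i ∧ ∀ i, P (Z i)

theorem SumOf.zero (P : ℂ → Prop) : SumOf P 0 0 := ⟨Fin.elim0, by simp, fun i => i.elim0⟩

theorem SumOf.one {P : ℂ → Prop} {z : ℂ} (h : P z) : SumOf P 1 z :=
  ⟨fun _ => z, by simp, fun _ => h⟩

theorem SumOf.add {P : ℂ → Prop} {k m : ℕ} {z w : ℂ} (h : SumOf P k z) (h' : SumOf P m w) :
    SumOf P (k + m) (z + w) := by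
  obtain ⟨Z, rfl, hZ⟩ := h
  obtain ⟨W, rfl, hW⟩ := h'
  refine ⟨Fin.append Z W, by simp [Fin.sum_univ_add], fun i => ?_⟩
  refine Fin.addCases (fun i => ?_) (fun i => ?_) i
  · simpa using hZ i
  · simpa using hW i

theorem trace_move {n : ℕ} (X A C ρ : Matrix (Fin n) (Fin n) ℂ) (hX : X.IsHermitian) :
    Matrix.trace (matComm X A * Cᴴ * ρ) - Matrix.trace (A * (matComm X C)ᴴ * ρ)
      = (-1) * Matrix.trace (A * Cᴴ * matComm X ρ) := by
  have h1 : Matrix.trace (X * (A * (Cᴴ * ρ))) = Matrix.trace (A * (Cᴴ * (ρ * X))) := by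
    rw [Matrix.trace_mul_comm]; simp only [Matrix.mul_assoc]
  simp only [matComm, Matrix.conjTranspose_sub, Matrix.conjTranspose_mul, hX.eq, Matrix.sub_mul,
    Matrix.mul_sub, Matrix.trace_sub, Matrix.mul_assoc, h1]
  ring

theorem commSeq_append {n : ℕ} (X Y : Matrix (Fin n) (Fin n) ℂ) (S T : List Bool)
    (B : Matrix (Fin n) (Fin n) ℂ) :
    commSeq X Y (S ++ T) B = commSeq X Y S (commSeq X Y T B) := by
  induction S with
  | nil => rfl
  | cons b S ih => simp [commSeq, ih]

theorem commSeq_sub {n : ℕ} (X Y : Matrix (Fin n) (Fin n) ℂ) (S : List Bool)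
    (B C : Matrix (Fin n) (Fin n) ℂ) :
    commSeq X Y S (B - C) = commSeq X Y S B - commSeq X Y S C := by
  induction S with
  | nil => rfl
  | cons b S ih =>
    simp only [commSeq, ih, matComm, Matrix.mul_sub, Matrix.sub_mul]
    abel

theorem nestedComm_X {n : ℕ} (X Y C : Matrix (Fin n) (Fin n) ℂ) (k : ℕ) :
    nestedComm X C k = commSeq X Y (List.replicate k false) C := by
  induction k with
  | zero => rfl
  | succ k ih => simp [nestedComm, List.replicate_succ, commSeq, matComm, ih]

theorem nestedComm_Y {n : ℕ} (X Y C : Matrix (Fin n) (Fin n) ℂ) (k : ℕ) :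
    nestedComm Y C k = commSeq X Y (List.replicate k true) C := by
  induction k with
  | zero => rfl
  | succ k ih => simp [nestedComm, List.replicate_succ, commSeq, matComm, ih]

theorem transfer {n : ℕ} (X Y A B ρ : Matrix (Fin n) (Fin n) ℂ)
    (hX : X.IsHermitian) (hY : Y.IsHermitian) (d : ℕ) (P Q : List Bool)
    (h : P.length + Q.length = d) :
    SumOf (AllowedTerm X Y A B ρ d) P.length
      (Matrix.trace (commSeq X Y P A * (commSeq X Y Q B)ᴴ * ρ)
        - Matrix.trace (A * (commSeq X Y (P.reverse ++ Q) B)ᴴ * ρ)) := by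
  induction P generalizing Q with
  | nil => simpa [commSeq] using SumOf.zero _
  | cons b P ih =>
    simp only [List.length_cons] at h
    have h2 := ih (b :: Q) (by simp only [List.length_cons]; omega)
    have h1 : SumOf (AllowedTerm X Y A B ρ d) 1
        (Matrix.trace (commSeq X Y (b :: P) A * (commSeq X Y Q B)ᴴ * ρ)
          - Matrix.trace (commSeq X Y P A * (commSeq X Y (b :: Q) B)ᴴ * ρ)) := by
      apply SumOf.one
      refine ⟨-1, P, Q, Or.inr rfl, ?_⟩
      cases b
      · exact Or.inl ⟨by omega, by simpa [commSeq] using trace_move X _ _ ρ hX⟩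
      · exact Or.inr (Or.inl ⟨by omega, by simpa [commSeq] using trace_move Y _ _ ρ hY⟩)
    have h3 := h2.add h1
    simp only [List.length_cons, List.reverse_cons, List.append_assoc, List.singleton_append]
    convert h3 using 1
    ring

theorem swap_one {n : ℕ} (X Y A B ρ : Matrix (Fin n) (Fin n) ℂ) (d : ℕ) (S T : List Bool)
    (h : S.length + T.length + 2 = d) :
    AllowedTerm X Y A B ρ d
      (Matrix.trace (A * (commSeq X Y (S ++ true :: false :: T) B)ᴴ * ρ)
        - Matrix.trace (A * (commSeq X Y (S ++ false :: true :: T) B)ᴴ * ρ)) := by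
  refine ⟨-1, S, T, Or.inr rfl, Or.inr (Or.inr ⟨by omega, ?_⟩)⟩
  have e : matComm (matComm X Y) (commSeq X Y T B)
      = commSeq X Y (false :: true :: T) B - commSeq X Y (true :: false :: T) B := by
    simp only [commSeq, matComm, if_true, Bool.false_eq_true, if_false]
    noncomm_ring
  rw [e, commSeq_sub, commSeq_append, commSeq_append]
  simp only [Matrix.conjTranspose_sub, Matrix.sub_mul, Matrix.mul_sub, Matrix.trace_sub]
  ring

theorem swap_row {n : ℕ} (X Y A B ρ : Matrix (Fin n) (Fin n) ℂ) (d m : ℕ) (S T : List Bool)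
    (h : S.length + T.length + m + 1 = d) :
    SumOf (AllowedTerm X Y A B ρ d) m
      (Matrix.trace (A * (commSeq X Y (S ++ true :: (List.replicate m false ++ T)) B)ᴴ * ρ)
        - Matrix.trace
          (A * (commSeq X Y (S ++ (List.replicate m false ++ true :: T)) B)ᴴ * ρ)) := by
  induction m generalizing S with
  | zero => simpa using SumOf.zero _
  | succ m ih =>
    have h1 := SumOf.one (swap_one X Y A B ρ d S (List.replicate m false ++ T)
      (by simp only [List.length_append, List.length_replicate]; omega))
    have h2 := ih (S ++ [false])
      (by simp only [List.length_append, List.length_cons, List.length_nil]; omega)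
    have h3 := h2.add h1
    simp only [List.append_assoc, List.singleton_append] at h3
    simp only [List.replicate_succ, List.cons_append]
    convert h3 using 1
    ring

theorem swap_block {n : ℕ} (X Y A B ρ : Matrix (Fin n) (Fin n) ℂ) (d k m : ℕ) (T : List Bool)
    (h : T.length + m + k = d) :
    SumOf (AllowedTerm X Y A B ρ d) (k * m)
      (Matrix.trace (A * (commSeq X Y
          (List.replicate k true ++ (List.replicate m false ++ T)) B)ᴴ * ρ)
        - Matrix.trace (A * (commSeq X Y
          (List.replicate m false ++ (List.replicate k true ++ T)) B)ᴴ * ρ)) := by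
  induction k generalizing T with
  | zero => simpa using SumOf.zero _
  | succ k ih =>
    have h1 := swap_row X Y A B ρ d m (List.replicate k true) T
      (by simp only [List.length_replicate]; omega)
    have h2 := ih (true :: T) (by simp only [List.length_cons]; omega)
    have h3 := h2.add h1
    simp only [List.replicate_succ', List.append_assoc, List.singleton_append]
    convert h3 using 1
    · ring
    · ring

/-- **Commutator monomial equivalences** (Lemma 3.8). For monomials
`p(x,y) = x^{i₁} y^{i₂}`, `q(x,y) = x^{j₁} y^{j₂}` and `r = pq` of degree
`d = i₁+i₂+j₁+j₂`, with `X, Y` Hermitian, the expression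
`tr(p(X,Y|A) q(X,Y|B)† ρ) - tr(A r(X,Y|B)† ρ)` equals a sum of at most `d²` error terms
`Zᵢ`, each of one of the three stated forms. -/
theorem commutator_monomial_equivalence (n i₁ i₂ j₁ j₂ : ℕ)
    (X Y A B ρ : Matrix (Fin n) (Fin n) ℂ)
    (hX : X.IsHermitian) (hY : Y.IsHermitian) :
    ∃ ℓ : ℕ, ℓ ≤ (i₁ + i₂ + j₁ + j₂) ^ 2 ∧
      ∃ Z : Fin ℓ → ℂ,
        (Matrix.trace (nestedComm X (nestedComm Y A i₂) i₁ *
            (nestedComm X (nestedComm Y B j₂) j₁)ᴴ * ρ)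
          - Matrix.trace (A * (nestedComm X (nestedComm Y B (i₂ + j₂)) (i₁ + j₁))ᴴ * ρ)
          = ∑ i, Z i) ∧
        (∀ i : Fin ℓ, ∃ (s : ℂ) (Sl Tl : List Bool), (s = 1 ∨ s = -1) ∧
          ((Sl.length + Tl.length = (i₁ + i₂ + j₁ + j₂) - 1 ∧
              Z i = s * Matrix.trace (commSeq X Y Sl A * (commSeq X Y Tl B)ᴴ * matComm X ρ)) ∨
           (Sl.length + Tl.length = (i₁ + i₂ + j₁ + j₂) - 1 ∧
              Z i = s * Matrix.trace (commSeq X Y Sl A * (commSeq X Y Tl B)ᴴ * matComm Y ρ)) ∨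
           (Sl.length + Tl.length = (i₁ + i₂ + j₁ + j₂) - 2 ∧
              Z i = s * Matrix.trace
                (A * (commSeq X Y Sl (matComm (matComm X Y) (commSeq X Y Tl B)))ᴴ * ρ)))) := by
  have h1 := transfer X Y A B ρ hX hY (i₁ + i₂ + j₁ + j₂)
    (List.replicate i₁ false ++ List.replicate i₂ true)
    (List.replicate j₁ false ++ List.replicate j₂ true)
    (by simp only [List.length_append, List.length_replicate]; omega)
  have h2 := swap_block X Y A B ρ (i₁ + i₂ + j₁ + j₂) i₂ (i₁ + j₁) (List.replicate j₂ true)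
    (by simp only [List.length_replicate]; omega)
  obtain ⟨Z, hZ, hP⟩ := h1.add h2
  refine ⟨_, ?_, Z, ?_, hP⟩
  · simp only [List.length_append, List.length_replicate]
    have ha : i₁ ≤ i₁ ^ 2 := Nat.le_self_pow (by norm_num) _
    have hb : i₂ ≤ i₂ ^ 2 := Nat.le_self_pow (by norm_num) _
    nlinarith [Nat.zero_le (i₁ * i₂), Nat.zero_le (i₂ * j₁), Nat.zero_le (i₁ * j₁),
      Nat.zero_le (i₁ * j₂), Nat.zero_le (i₂ * j₂), Nat.zero_le (j₁ * j₂),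
      Nat.zero_le (j₁ ^ 2), Nat.zero_le (j₂ ^ 2)]
  · rw [← hZ]
    simp only [nestedComm_X X Y, nestedComm_Y X Y, ← commSeq_append, List.reverse_append,
      List.reverse_replicate, List.append_assoc, List.replicate_add]
    ring
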